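/- Let (X,T) be a TDS with upper semi-continuous entropy map and h_top(T) < ∞, and Φ a subadditive potential with β(Φ) > -∞. For each t > 0 let μ_t be an equilibrium state for tΦ (i.e., h_{μ_t}(T) + t χ(μ_t,Φ) = P(t)). Then any weak-* accumulation point μ of (μ_t) as t → ∞ satisfies χ(μ,Φ) = β(Φ), i.e., μ is a Lyapunov maximizing measure. -/

import Mathlib

open MeasureTheory Filter Topology Set
open scoped ENNReal NNReal

/-- Positive part of an extended real, as an extended nonnegative real. -/
noncomputable def EReal.posPart (a : EReal) : ℝ≥0∞ :=
  if a = ⊤ then ⊤ else ENNReal.ofReal a.toReal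

/-- `EReal`-valued logarithm of a real number: `elog r = -∞` for `r ≤ 0`. -/
noncomputable def elog (r : ℝ) : EReal := ENNReal.log (ENNReal.ofReal r)

/-- The integral of an `EReal`-valued function, with values in `[-∞, ∞]`. -/
noncomputable def eint {X : Type*} [MeasurableSpace X] (μ : Measure X) (f : X → EReal) : EReal :=
  ((∫⁻ x, (f x).posPart ∂μ : ℝ≥0∞) : EReal) - ((∫⁻ x, (-f x).posPart ∂μ : ℝ≥0∞) : EReal)

/-- `Φ = {log φₙ}` is a subadditive potential for `T`: each `φₙ` is continuous,
nonnegative, and `φ_{n+m}(x) ≤ φₙ(x) · φₘ(Tⁿ x)`. -/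
def SubadditivePotential {X : Type*} [TopologicalSpace X] (T : X → X) (φ : ℕ → X → ℝ) : Prop :=
  (∀ n, 1 ≤ n → Continuous (φ n)) ∧ (∀ n x, 1 ≤ n → 0 ≤ φ n x) ∧
    (∀ m n : ℕ, 1 ≤ m → 1 ≤ n → ∀ x, φ (n + m) x ≤ φ n x * φ m (T^[n] x))

/-!
For `μ` invariant, `χ(μ, Φ)` is the infimum over `m ≥ 1` and `M` of the averages
`(1/m) ∫ max (log φₘ) (-M) dμ`: truncation makes each of them weak-* continuous in `μ`, so `χ` is
upper semicontinuous. The same averages, evaluated on empirical measures along orbits of maximum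
points of `φₙ`, produce an invariant measure `ν` with `χ(ν, Φ) = β(Φ)`. Comparing `μ_t` with `ν` in
`h + t χ` gives `χ(μ_t, Φ) ≥ β(Φ) - O(1/t)`, and upper semicontinuity transfers this to the limit.
-/

section Integral

variable {X : Type*} [MeasurableSpace X] {μ : Measure X}

theorem erealPosPart_eq_toENNReal : EReal.posPart = EReal.toENNReal := by
  ext a
  rw [EReal.posPart, EReal.toENNReal]

theorem eint_eq_lintegral_sub (μ : Measure X) (f : X → EReal) :
    eint μ f = ((∫⁻ x, (f x).toENNReal ∂μ : ℝ≥0∞) : EReal) -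
      ((∫⁻ x, (-f x).toENNReal ∂μ : ℝ≥0∞) : EReal) := by
  rw [eint, erealPosPart_eq_toENNReal]

theorem eint_mono {f g : X → EReal} (hfg : ∀ x, f x ≤ g x) : eint μ f ≤ eint μ g := by
  simp only [eint_eq_lintegral_sub]
  refine EReal.sub_le_sub ?_ ?_
  · exact EReal.coe_ennreal_le_coe_ennreal_iff.2
      (lintegral_mono fun x ↦ EReal.toENNReal_le_toENNReal (hfg x))
  · exact EReal.coe_ennreal_le_coe_ennreal_iff.2
      (lintegral_mono fun x ↦ EReal.toENNReal_le_toENNReal (EReal.neg_le_neg_iff.2 (hfg x)))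

theorem eint_const [IsProbabilityMeasure μ] (c : EReal) : eint μ (fun _ ↦ c) = c := by
  rw [eint_eq_lintegral_sub]
  simp only [lintegral_const, measure_univ, mul_one, EReal.coe_toENNReal_eq_max]
  rcases le_total c 0 with hc | hc
  · rw [max_eq_left hc, max_eq_right (EReal.neg_nonneg.2 hc), zero_sub, neg_neg]
  · rw [max_eq_right hc, max_eq_left (EReal.neg_le_zero.2 hc), sub_zero]

theorem eint_coe {f : X → ℝ} (hf : Integrable f μ) :
    eint μ (fun x ↦ (f x : EReal)) = ((∫ x, f x ∂μ : ℝ) : EReal) := by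
  have hneg : ∫⁻ x, ENNReal.ofReal (-f x) ∂μ ≠ ⊤ := hf.neg.lintegral_lt_top.ne
  simp only [eint_eq_lintegral_sub, ← EReal.coe_neg, EReal.real_coe_toENNReal]
  rw [integral_eq_lintegral_pos_part_sub_lintegral_neg_part hf, EReal.coe_sub,
    EReal.coe_ennreal_toReal (hf.lintegral_lt_top.ne), EReal.coe_ennreal_toReal hneg]

theorem tendsto_eint_max_neg_natCast {f : X → EReal} (hf : Measurable f)
    (hf_top : ∫⁻ x, (f x).toENNReal ∂μ ≠ ⊤) :
    Tendsto (fun M : ℕ ↦ eint μ (fun x ↦ max (f x) (-(M : EReal)))) atTop (𝓝 (eint μ f)) := by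
  have toENNReal_max (M : ℕ) (a : EReal) : (max a (-(M : EReal))).toENNReal = a.toENNReal := by
    have hM : (-(M : EReal)).toENNReal = 0 :=
      EReal.toENNReal_of_nonpos (EReal.neg_le_zero.2 (Nat.cast_nonneg' M))
    rw [(show Monotone EReal.toENNReal from fun _ _ ↦ EReal.toENNReal_le_toENNReal).map_max, hM]
    exact max_eq_left zero_le
  have toENNReal_neg_max (M : ℕ) (a : EReal) :
      (-max a (-(M : EReal))).toENNReal = min (-a).toENNReal M := by
    have hanti : Antitone fun a : EReal ↦ (-a).toENNReal := fun _ _ h ↦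
      EReal.toENNReal_le_toENNReal (EReal.neg_le_neg_iff.2 h)
    rw [hanti.map_max, neg_neg, ← EReal.coe_natCast, EReal.real_coe_toENNReal,
      ENNReal.ofReal_natCast]
  simp only [eint_eq_lintegral_sub, toENNReal_max, toENNReal_neg_max]
  have hneg : Tendsto (fun M : ℕ ↦ ∫⁻ x, min (-f x).toENNReal (M : ℝ≥0∞) ∂μ) atTop
      (𝓝 (∫⁻ x, (-f x).toENNReal ∂μ)) := by
    refine lintegral_tendsto_of_tendsto_of_monotone
      (fun M ↦ (hf.neg.ereal_toENNReal.min measurable_const).aemeasurable)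
      (.of_forall fun x M N hMN ↦ min_le_min_left _ (Nat.cast_le.2 hMN)) (.of_forall fun x ↦ ?_)
    simpa using (tendsto_const_nhds (x := (-f x).toENNReal)).min ENNReal.tendsto_nat_nhds_top
  have hcoe := (continuous_neg.comp continuous_coe_ennreal_ereal).continuousAt.tendsto.comp hneg
  exact (EReal.continuousAt_add (.inl (EReal.coe_ennreal_eq_top_iff.not.2 hf_top))
    (.inl (EReal.coe_ennreal_ne_bot _))).tendsto.comp (tendsto_const_nhds.prodMk_nhds hcoe)

end Integral

section Log

theorem elog_mono : Monotone elog := fun _ _ h ↦ ENNReal.log_le_log (ENNReal.ofReal_le_ofReal h)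

theorem elog_exp (s : ℝ) : elog (Real.exp s) = s := by
  rw [elog, ENNReal.log_ofReal_of_pos (Real.exp_pos s), Real.log_exp]

theorem measurable_elog : Measurable elog := ENNReal.measurable_log.comp ENNReal.measurable_ofReal

/-- The logarithm truncated below at `-M`, that is `max (log r) (-M)` with `log r = -∞` for
`r ≤ 0`. It is a continuous real-valued substitute for `elog`. -/
noncomputable def truncLog (M : ℕ) (r : ℝ) : ℝ := Real.log (max r (Real.exp (-M)))

theorem continuous_truncLog (M : ℕ) : Continuous (truncLog M) :=
  (continuous_id.max continuous_const).log fun _ ↦ (lt_max_of_lt_right (Real.exp_pos _)).ne'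

theorem exp_truncLog (M : ℕ) (r : ℝ) : Real.exp (truncLog M r) = max r (Real.exp (-M)) :=
  Real.exp_log (lt_max_of_lt_right (Real.exp_pos _))

theorem coe_truncLog (M : ℕ) (r : ℝ) : (truncLog M r : EReal) = max (elog r) (-(M : EReal)) := by
  rw [← elog_exp, exp_truncLog, elog_mono.map_max, elog_exp]
  rfl

theorem neg_le_truncLog (M : ℕ) (r : ℝ) : -(M : ℝ) ≤ truncLog M r := by
  rw [← Real.exp_le_exp, exp_truncLog]
  exact le_max_right _ _

theorem le_exp_truncLog (M : ℕ) (r : ℝ) : r ≤ Real.exp (truncLog M r) := by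
  rw [exp_truncLog]
  exact le_max_left _ _

theorem tendsto_integral_truncLog {X : Type*} [TopologicalSpace X] [CompactSpace X]
    [MeasurableSpace X] [BorelSpace X] (μ : Measure X) [IsFiniteMeasure μ] {f : X → ℝ}
    (hf : Continuous f) :
    Tendsto (fun M : ℕ ↦ ((∫ x, truncLog M (f x) ∂μ : ℝ) : EReal)) atTop
      (𝓝 (eint μ fun x ↦ elog (f x))) := by
  have hint (M : ℕ) : Integrable (fun x ↦ truncLog M (f x)) μ :=
    ((continuous_truncLog M).comp hf).integrable_of_hasCompactSupport (.of_compactSpace _)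
  simp only [← eint_coe (hint _), coe_truncLog]
  refine tendsto_eint_max_neg_natCast (measurable_elog.comp hf.measurable) ?_
  refine ne_top_of_le_ne_top (hint 0).lintegral_lt_top.ne (lintegral_mono fun x ↦ ?_)
  rw [← EReal.real_coe_toENNReal, coe_truncLog]
  exact EReal.toENNReal_le_toENNReal (le_max_left _ _)

end Log

section BirkhoffSum

variable {X : Type*} {T : X → X} {g : X → ℝ}

theorem sum_birkhoffSum_iterate {M : Type*} [AddCommMonoid M] (T : X → X) (g : X → M) (m k : ℕ)
    (x : X) :
    ∑ j ∈ Finset.range m, birkhoffSum T^[m] g k (T^[j] x) = birkhoffSum T g (k * m) x := by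
  induction k with
  | zero => simp
  | succ k ih =>
    simp only [birkhoffSum_succ, Finset.sum_add_distrib, ih, add_mul, one_mul, birkhoffSum_add]
    congr 1
    refine Finset.sum_congr rfl fun j _ ↦ ?_
    rw [← Function.iterate_mul, ← Function.iterate_add_apply, ← Function.iterate_add_apply,
      mul_comm m k, add_comm]

theorem neg_natCast_mul_le_birkhoffSum {C : ℝ} (hg : ∀ x, -C ≤ g x) (n : ℕ) (x : X) :
    -(n * C) ≤ birkhoffSum T g n x := by
  simpa [birkhoffSum] using
    Finset.card_nsmul_le_sum (Finset.range n) (fun i ↦ g (T^[i] x)) (-C) fun _ _ ↦ hg _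

theorem birkhoffSum_apply_le_add {C : ℝ} (hg : ∀ x, -C ≤ g x) (N q : ℕ) (x : X) :
    birkhoffSum T g N (T x) ≤ birkhoffSum T g (N + 1 + q) x + (q + 1) * C := by
  rw [birkhoffSum_add, birkhoffSum_succ']
  linarith [hg x, neg_natCast_mul_le_birkhoffSum (T := T) hg q (T^[N + 1] x)]

theorem integral_birkhoffSum [MeasurableSpace X] {μ : Measure X} (hT : MeasurePreserving T μ μ)
    (hg : Integrable g μ) (n : ℕ) : ∫ x, birkhoffSum T g n x ∂μ = n * ∫ x, g x ∂μ := by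
  have hint (i : ℕ) : Integrable (fun x ↦ g (T^[i] x)) μ :=
    (hT.iterate i).integrable_comp_of_integrable hg
  have hinv (i : ℕ) : ∫ x, g (T^[i] x) ∂μ = ∫ x, g x ∂μ := by
    have hi := hT.iterate i
    rw [← integral_map hi.aemeasurable (hi.map_eq.symm ▸ hg.aestronglyMeasurable), hi.map_eq]
  simp only [birkhoffSum]
  rw [integral_finsetSum _ fun i _ ↦ hint i]
  simp [hinv]

end BirkhoffSum

namespace SubadditivePotential

variable {X : Type*} [TopologicalSpace X] {T : X → X} {φ : ℕ → X → ℝ}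

theorem le_exp_birkhoffSum_iterate (hφ : SubadditivePotential T φ) {m : ℕ} (hm : 1 ≤ m)
    {g : X → ℝ} (hg : ∀ x, φ m x ≤ Real.exp (g x)) {r : ℕ} (hr : 1 ≤ r) {C : ℝ}
    (hC : ∀ x, φ r x ≤ Real.exp C) (k : ℕ) (x : X) :
    φ (k * m + r) x ≤ Real.exp (birkhoffSum T^[m] g k x + C) := by
  induction k generalizing x with
  | zero => simpa using hC x
  | succ k ih =>
    have hpos : 1 ≤ k * m + r := le_add_left hr
    calc φ ((k + 1) * m + r) x = φ (m + (k * m + r)) x := by ring_nf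
      _ ≤ φ m x * φ (k * m + r) (T^[m] x) := hφ.2.2 _ _ hpos hm x
      _ ≤ Real.exp (g x) * Real.exp (birkhoffSum T^[m] g k (T^[m] x) + C) :=
        mul_le_mul (hg x) (ih _) (hφ.2.1 _ _ hpos) (Real.exp_pos _).le
      _ = Real.exp (birkhoffSum T^[m] g (k + 1) x + C) := by
        rw [← Real.exp_add, birkhoffSum_succ', add_assoc]

-- Each of the `m` phases `j` splits the orbit segment into blocks of length `m` starting at
-- `T^[j + 1] x`; summing over the phases fills in a full Birkhoff sum.
theorem mul_log_le_birkhoffSum (hφ : SubadditivePotential T φ) {m : ℕ} (hm : 1 ≤ m)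
    {g : X → ℝ} (hg : ∀ x, φ m x ≤ Real.exp (g x)) {C : ℝ}
    (hC : ∀ r ∈ Finset.Icc 1 (2 * m), ∀ x, φ r x ≤ Real.exp C) (k : ℕ) {s : ℕ} (hms : m < s)
    (hsm : s ≤ 2 * m) {x : X} (hx : 0 < φ (k * m + s) x) :
    m * Real.log (φ (k * m + s) x) ≤ birkhoffSum T g (k * m) (T x) + m * (2 * C) := by
  have phase_bound (j : ℕ) (hj : j ∈ Finset.range m) :
      Real.log (φ (k * m + s) x) ≤ birkhoffSum T^[m] g k (T^[j] (T x)) + 2 * C := by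
    have hjm : j < m := Finset.mem_range.1 hj
    have hr : s - (j + 1) ∈ Finset.Icc 1 (2 * m) := Finset.mem_Icc.2 ⟨by omega, by omega⟩
    have hr_one := (Finset.mem_Icc.1 hr).1
    have hsplit : k * m + s = (j + 1) + (k * m + (s - (j + 1))) := by omega
    rw [Real.log_le_iff_le_exp hx, ← Function.iterate_succ_apply]
    calc φ (k * m + s) x ≤ φ (j + 1) x * φ (k * m + (s - (j + 1))) (T^[j + 1] x) := by
          conv_lhs => rw [hsplit]
          exact hφ.2.2 _ _ (le_add_left hr_one) (by omega) x
      _ ≤ Real.exp C * Real.exp (birkhoffSum T^[m] g k (T^[j + 1] x) + C) :=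
        mul_le_mul (hC _ (Finset.mem_Icc.2 ⟨by omega, by omega⟩) x)
          (hφ.le_exp_birkhoffSum_iterate hm hg hr_one (hC _ hr) k _)
          (hφ.2.1 _ _ (le_add_left hr_one)) (Real.exp_pos _).le
      _ = Real.exp (birkhoffSum T^[m] g k (T^[j + 1] x) + 2 * C) := by
        rw [← Real.exp_add]
        ring_nf
  have hsum := Finset.sum_le_sum phase_bound
  rwa [Finset.sum_add_distrib, sum_birkhoffSum_iterate, Finset.sum_const, Finset.sum_const,
    Finset.card_range, nsmul_eq_mul, nsmul_eq_mul] at hsum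

theorem exists_forall_le_exp [CompactSpace X] (hφ : SubadditivePotential T φ) (m M : ℕ) :
    ∃ C : ℝ, M ≤ C ∧ ∀ r ∈ Finset.Icc 1 m, ∀ x, φ r x ≤ Real.exp C := by
  have hbound (r : ℕ) (hr : r ∈ Finset.Icc 1 m) :
      ∀ᶠ C in atTop, ∀ x, φ r x ≤ Real.exp C := by
    obtain ⟨B, hB⟩ := (isCompact_range (hφ.1 r (Finset.mem_Icc.1 hr).1)).bddAbove
    filter_upwards [Real.tendsto_exp_atTop.eventually_ge_atTop B] with C hC x
    exact (hB ⟨x, rfl⟩).trans hC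
  exact ((eventually_ge_atTop _).and ((Filter.eventually_all_finset _).2 hbound)).exists

theorem exists_elog_le_birkhoffSum [CompactSpace X] (hφ : SubadditivePotential T φ) {m : ℕ}
    (hm : 1 ≤ m) (M : ℕ) :
    ∃ K : ℝ, ∀ n > m, ∀ x,
      elog (φ n x) ≤ (((birkhoffSum T (fun y ↦ truncLog M (φ m y)) n x + K) / m : ℝ) : EReal) := by
  obtain ⟨C, hMC, hC⟩ := hφ.exists_forall_le_exp (2 * m) M
  have hC_nonneg : 0 ≤ C := (Nat.cast_nonneg M).trans hMC
  set g : X → ℝ := fun y ↦ truncLog M (φ m y)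
  have hgC (y : X) : -C ≤ g y := (neg_le_neg hMC).trans (neg_le_truncLog M _)
  refine ⟨4 * m * C, fun n hn x ↦ ?_⟩
  obtain ⟨k, s, hms, hsm, rfl⟩ : ∃ k s, m < s ∧ s ≤ 2 * m ∧ n = k * m + s := by
    refine ⟨(n - m - 1) / m, (n - m - 1) % m + m + 1, by omega, ?_, ?_⟩
    · have := Nat.mod_lt (n - m - 1) hm
      omega
    · have := Nat.div_add_mod' (n - m - 1) m
      omega
  rw [← elog_exp]
  refine elog_mono ?_
  rcases (hφ.2.1 (k * m + s) x (by omega)).eq_or_lt with hzero | hpos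
  · rw [← hzero]
    exact (Real.exp_pos _).le
  rw [← Real.log_le_iff_le_exp hpos, le_div_iff₀ (by exact_mod_cast hm), mul_comm]
  have hblocks := hφ.mul_log_le_birkhoffSum hm (fun y ↦ le_exp_truncLog M (φ m y)) hC k hms hsm hpos
  obtain ⟨q, rfl⟩ : ∃ q, s = 1 + q := ⟨s - 1, by omega⟩
  have hends := birkhoffSum_apply_le_add (T := T) hgC (k * m) q x
  rw [add_assoc (k * m)] at hends
  have hq : ((q : ℝ) + 1) * C ≤ 2 * m * C :=
    mul_le_mul_of_nonneg_right (by exact_mod_cast add_comm q 1 ▸ hsm) hC_nonneg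
  linarith

end SubadditivePotential

section Exponents

/-- `c` is the Lyapunov exponent `χ(μ, Φ) = lim (1/n) ∫ log φₙ dμ` of the measure `μ`. -/
def HasLyapunovExponent {X : Type*} [MeasurableSpace X] (φ : ℕ → X → ℝ) (μ : Measure X)
    (c : EReal) : Prop :=
  Tendsto (fun n : ℕ ↦ eint μ (fun x ↦ elog (φ n x)) / (n : EReal)) atTop (𝓝 c)

/-- `b` is the maximal exponent `β(Φ) = lim (1/n) log sup φₙ`. -/
def HasMaximalExponent {X : Type*} (φ : ℕ → X → ℝ) (b : EReal) : Prop :=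
  Tendsto (fun n : ℕ ↦ elog (⨆ x, φ n x) / (n : EReal)) atTop (𝓝 b)

theorem le_of_tendsto_div_natCast {ι : Type*} {l : Filter ι} [l.NeBot] {k : ι → ℕ}
    (hk : Tendsto k l atTop) {u : ι → EReal} {c : EReal}
    (hu : Tendsto (fun i ↦ u i / (k i : EReal)) l (𝓝 c)) {s : ι → ℝ} {I : ℝ}
    (hs : Tendsto (fun i ↦ (k i : ℝ)⁻¹ * s i) l (𝓝 I)) {K : ℝ} {m : ℕ}
    (hle : ∀ᶠ i in l, u i ≤ (((s i + K) / m : ℝ) : EReal)) : c ≤ ((I / m : ℝ) : EReal) := by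
  have hlim : Tendsto (fun i ↦ ((k i : ℝ)⁻¹ * s i + K / k i) / m) l (𝓝 (I / m)) := by
    simpa using
      (hs.add ((tendsto_const_div_atTop_nhds_zero_nat K).comp hk)).div_const (m : ℝ)
  refine le_of_tendsto_of_tendsto hu (EReal.tendsto_coe.2 hlim) ?_
  filter_upwards [hle] with i hi
  calc u i / (k i : EReal) ≤ (((s i + K) / m : ℝ) : EReal) / ((k i : ℝ) : EReal) :=
        EReal.div_le_div_right_of_nonneg (Nat.cast_nonneg' (k i)) hi
    _ = (((k i : ℝ)⁻¹ * s i + K / k i) / m : ℝ) := by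
      rw [← EReal.coe_div]
      congr 1
      ring

variable {X : Type*} [TopologicalSpace X] [CompactSpace X] [MeasurableSpace X]
  {T : X → X} {φ : ℕ → X → ℝ} {μ : Measure X} [IsProbabilityMeasure μ] {b c : EReal}

theorem HasLyapunovExponent.le_maximalExponent (hc : HasLyapunovExponent φ μ c)
    (hφ : SubadditivePotential T φ) (hb : HasMaximalExponent φ b) : c ≤ b := by
  refine le_of_tendsto_of_tendsto hc hb ?_
  filter_upwards [eventually_ge_atTop 1] with n hn
  refine EReal.div_le_div_right_of_nonneg (Nat.cast_nonneg' n) ?_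
  calc eint μ (fun x ↦ elog (φ n x)) ≤ eint μ fun _ ↦ elog (⨆ x, φ n x) :=
        eint_mono fun x ↦ elog_mono (le_ciSup (isCompact_range (hφ.1 n hn)).bddAbove x)
    _ = elog (⨆ x, φ n x) := eint_const _

variable [BorelSpace X]

theorem HasLyapunovExponent.le_integral_truncLog_div (hc : HasLyapunovExponent φ μ c)
    (hφ : SubadditivePotential T φ) (hT : MeasurePreserving T μ μ) {m : ℕ} (hm : 1 ≤ m) (M : ℕ) :
    c ≤ (((∫ x, truncLog M (φ m x) ∂μ) / m : ℝ) : EReal) := by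
  obtain ⟨K, hK⟩ := hφ.exists_elog_le_birkhoffSum hm M
  set g : X → ℝ := fun x ↦ truncLog M (φ m x)
  have hg : Integrable g μ := ((continuous_truncLog M).comp
    (hφ.1 m hm)).integrable_of_hasCompactSupport (.of_compactSpace _)
  have hsum (n : ℕ) : Integrable (birkhoffSum T g n) μ :=
    integrable_finsetSum _ fun i _ ↦ (hT.iterate i).integrable_comp_of_integrable hg
  have haverage : Tendsto (fun n : ℕ ↦ (n : ℝ)⁻¹ * (n * ∫ x, g x ∂μ)) atTop
      (𝓝 (∫ x, g x ∂μ)) := by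
    refine tendsto_const_nhds.congr' ?_
    filter_upwards [eventually_ne_atTop 0] with n hn
    exact (inv_mul_cancel_left₀ (Nat.cast_ne_zero.2 hn) _).symm
  refine le_of_tendsto_div_natCast tendsto_id hc haverage (K := K) ?_
  filter_upwards [eventually_gt_atTop m] with n hn
  calc eint μ (fun x ↦ elog (φ n x))
      ≤ eint μ fun x ↦ (((birkhoffSum T g n x + K) / m : ℝ) : EReal) := eint_mono (hK n hn)
    _ = ((∫ x, (birkhoffSum T g n x + K) / m ∂μ : ℝ) : EReal) :=
      eint_coe (((hsum n).add (integrable_const K)).div_const _)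
    _ = (((n * ∫ x, g x ∂μ) + K) / m : ℝ) := by
      rw [integral_div, integral_add (hsum n) (integrable_const K), integral_birkhoffSum hT hg]
      simp

theorem HasLyapunovExponent.le_of_forall_le_integral_truncLog_div
    (hc : HasLyapunovExponent φ μ c) (hφ : SubadditivePotential T φ)
    (hb : ∀ m : ℕ, 1 ≤ m → ∀ M : ℕ, b ≤ (((∫ x, truncLog M (φ m x) ∂μ) / m : ℝ) : EReal)) :
    b ≤ c := by
  refine ge_of_tendsto hc ?_
  filter_upwards [eventually_ge_atTop 1] with m hm
  have hm_pos : (0 : EReal) < m := by exact_mod_cast hm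
  rw [EReal.le_div_iff_mul_le hm_pos (EReal.natCast_ne_top m)]
  refine ge_of_tendsto' (tendsto_integral_truncLog μ (hφ.1 m hm)) fun M ↦ ?_
  rw [← EReal.le_div_iff_mul_le hm_pos (EReal.natCast_ne_top m)]
  exact (hb m hm M).trans_eq (EReal.coe_div _ _)

end Exponents

section InvariantMeasures

/-- The set `M(X, T)` of `T`-invariant Borel probability measures. -/
def invariantMeasures {X : Type*} [MeasurableSpace X] (T : X → X) : Set (ProbabilityMeasure X) :=
  {μ | Measure.map T (μ : Measure X) = (μ : Measure X)}

/-- The empirical measure of the orbit segment `x, T x, …, Tⁿ x`. It has `n + 1` atoms, so that it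
is a probability measure for every `n`. -/
noncomputable def empiricalMeasure {X : Type*} [MeasurableSpace X] (T : X → X) (n : ℕ) (x : X) :
    ProbabilityMeasure X :=
  ⟨((n + 1 : ℕ) : ℝ≥0∞)⁻¹ • ∑ i ∈ Finset.range (n + 1), Measure.dirac (T^[i] x), ⟨by
    simpa using ENNReal.inv_mul_cancel (a := ((n + 1 : ℕ) : ℝ≥0∞)) (by simp)
      (ENNReal.natCast_ne_top _)⟩⟩

variable {X : Type*} [TopologicalSpace X] [MeasurableSpace X] [BorelSpace X] {T : X → X}
  {φ : ℕ → X → ℝ}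

theorem isClosed_invariantMeasures [HasOuterApproxClosed X] (hT : Continuous T) :
    IsClosed (invariantMeasures T) := by
  have heq : invariantMeasures T =
      {μ | μ.map hT.measurable.aemeasurable = μ} := by
    ext μ
    exact (Subtype.ext_iff (a1 := μ.map hT.measurable.aemeasurable) (a2 := μ)).symm
  rw [heq]
  exact isClosed_eq (ProbabilityMeasure.continuous_map hT) continuous_id

variable [CompactSpace X]

theorem integral_empiricalMeasure (T : X → X) (n : ℕ) (x : X) {f : X → ℝ} (hf : Continuous f) :
    ∫ y, f y ∂(empiricalMeasure T n x : Measure X) = birkhoffAverage ℝ T f (n + 1) x := by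
  have hint (i : ℕ) : Integrable f (Measure.dirac (T^[i] x)) :=
    hf.integrable_of_hasCompactSupport (.of_compactSpace _)
  rw [empiricalMeasure, ProbabilityMeasure.coe_mk, integral_smul_measure,
    integral_finsetSum_measure fun i _ ↦ hint i, ENNReal.toReal_inv, ENNReal.toReal_natCast]
  simp [integral_dirac' _ _ hf.measurable.stronglyMeasurable, birkhoffAverage, birkhoffSum]

theorem tendsto_birkhoffAverage_of_tendsto_empiricalMeasure {l : Filter ℕ} {x : ℕ → X}
    {ν : ProbabilityMeasure X}
    (hν : Tendsto (fun n ↦ empiricalMeasure T n (x n)) l (𝓝 ν)) {f : X → ℝ} (hf : Continuous f) :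
    Tendsto (fun n ↦ birkhoffAverage ℝ T f (n + 1) (x n)) l (𝓝 (∫ y, f y ∂(ν : Measure X))) := by
  simpa only [Function.comp_def, ContinuousMap.coe_mk, integral_empiricalMeasure T _ _ hf] using
    ((ProbabilityMeasure.continuous_integral_continuousMap (⟨f, hf⟩ : C(X, ℝ))).tendsto ν).comp hν

theorem upperSemicontinuousOn_lyapunovExponent (hT : Measurable T)
    (hφ : SubadditivePotential T φ) {χ : ProbabilityMeasure X → EReal}
    (hχ : ∀ μ ∈ invariantMeasures T, HasLyapunovExponent φ (μ : Measure X) (χ μ)) :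
    UpperSemicontinuousOn χ (invariantMeasures T) := by
  intro μ hμ y hy
  obtain ⟨m, hm, M, hmM⟩ : ∃ m : ℕ, 1 ≤ m ∧ ∃ M : ℕ,
      (((∫ x, truncLog M (φ m x) ∂(μ : Measure X)) / m : ℝ) : EReal) < y := by
    by_contra! hle
    exact hy.not_ge ((hχ μ hμ).le_of_forall_le_integral_truncLog_div hφ hle)
  have hcont : Continuous fun ν : ProbabilityMeasure X ↦
      (((∫ x, truncLog M (φ m x) ∂(ν : Measure X)) / m : ℝ) : EReal) :=
    continuous_coe_real_ereal.comp ((ProbabilityMeasure.continuous_integral_continuousMap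
      (⟨_, (continuous_truncLog M).comp (hφ.1 m hm)⟩ : C(X, ℝ))).div_const _)
  filter_upwards [self_mem_nhdsWithin,
    mem_nhdsWithin_of_mem_nhds (hcont.continuousAt.eventually_lt_const hmM)] with ν hν hlt
  exact ((hχ ν hν).le_integral_truncLog_div hφ ⟨hT, hν⟩ hm M).trans_lt hlt

variable [HasOuterApproxClosed X]

theorem mem_invariantMeasures_of_tendsto_empiricalMeasure (hT : Continuous T) {l : Filter ℕ}
    [l.NeBot] (hl : l ≤ atTop) {x : ℕ → X} {ν : ProbabilityMeasure X}
    (hν : Tendsto (fun n ↦ empiricalMeasure T n (x n)) l (𝓝 ν)) : ν ∈ invariantMeasures T := by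
  have := Measure.isProbabilityMeasure_map (μ := (ν : Measure X)) hT.measurable.aemeasurable
  refine ext_of_forall_integral_eq_of_IsFiniteMeasure fun f ↦ ?_
  rw [integral_map hT.measurable.aemeasurable f.continuous.measurable.aestronglyMeasurable]
  have hdiff :=
    (tendsto_birkhoffAverage_of_tendsto_empiricalMeasure hν (f.continuous.comp hT)).sub
      (tendsto_birkhoffAverage_of_tendsto_empiricalMeasure hν f.continuous)
  refine sub_eq_zero.1 (tendsto_nhds_unique hdiff ?_)
  have hbound := (((tendsto_const_div_atTop_nhds_zero_nat (2 * ‖f‖)).comp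
    (tendsto_add_atTop_nat 1)).mono_left hl)
  refine squeeze_zero_norm (fun n ↦ ?_) hbound
  have hcomp : birkhoffAverage ℝ T (f ∘ T) (n + 1) (x n) =
      birkhoffAverage ℝ T f (n + 1) (T (x n)) := by
    simp [birkhoffAverage, birkhoffSum, ← Function.iterate_succ_apply', Function.iterate_succ_apply]
  rw [hcomp, ← dist_eq_norm, dist_birkhoffAverage_apply_birkhoffAverage]
  exact div_le_div_of_nonneg_right (f.dist_le_two_norm _ _) (Nat.cast_nonneg _)

theorem exists_maximizing_measure [T2Space X] [Nonempty X] (hT : Continuous T)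
    (hφ : SubadditivePotential T φ) {b : EReal} (hb : HasMaximalExponent φ b) :
    ∃ ν ∈ invariantMeasures T, ∀ c, HasLyapunovExponent φ (ν : Measure X) c → c = b := by
  have hmax (n : ℕ) : ∃ x, φ (n + 1) x = ⨆ y, φ (n + 1) y :=
    (isCompact_range (hφ.1 (n + 1) n.succ_pos)).sSup_mem (range_nonempty _)
  choose x hx using hmax
  obtain ⟨ν, -, hcluster⟩ := isCompact_univ.exists_mapClusterPt
    (f := atTop) (u := fun n ↦ empiricalMeasure T n (x n)) (by simp)
  obtain ⟨U, hU, hν⟩ := mapClusterPt_iff_ultrafilter.1 hcluster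
  refine ⟨ν, mem_invariantMeasures_of_tendsto_empiricalMeasure hT hU hν, fun c hc ↦
    (hc.le_maximalExponent hφ hb).antisymm
      (hc.le_of_forall_le_integral_truncLog_div hφ fun m hm M ↦ ?_)⟩
  obtain ⟨K, hK⟩ := hφ.exists_elog_le_birkhoffSum hm M
  have hshift : Tendsto (· + 1) (U : Filter ℕ) atTop := (tendsto_add_atTop_nat 1).mono_left hU
  have haverage := tendsto_birkhoffAverage_of_tendsto_empiricalMeasure hν
    ((continuous_truncLog M).comp (hφ.1 m hm))
  refine le_of_tendsto_div_natCast hshift (hb.comp hshift) haverage (K := K) ?_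
  filter_upwards [hshift.eventually_gt_atTop m] with n hn
  exact (congrArg elog (hx n)).ge.trans (hK (n + 1) hn (x n))

end InvariantMeasures

section Equilibrium

theorem eventually_forall_lt_of_add_mul_le {b c : EReal} (hcb : c < b) (r R : ℝ) :
    ∀ᶠ t : ℝ in atTop, ∀ y : EReal, (r : EReal) + t * b ≤ R + t * y → c < y := by
  obtain ⟨d, hcd, hdb⟩ := EReal.lt_iff_exists_real_btwn.1 hcb
  obtain ⟨e, hce, hed⟩ := EReal.lt_iff_exists_real_btwn.1 hcd
  have hed' : 0 < d - e := sub_pos.2 (EReal.coe_lt_coe_iff.1 hed)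
  filter_upwards [eventually_gt_atTop 0, eventually_gt_atTop ((R - r) / (d - e))]
    with t ht hlarge y hy
  by_contra! hyc
  have ht' : (0 : EReal) ≤ t := EReal.coe_nonneg.2 ht.le
  have hle : (r : EReal) + t * d ≤ R + t * e := calc
    (r : EReal) + t * d ≤ r + t * b := by gcongr
    _ ≤ R + t * y := hy
    _ ≤ R + t * e := by
      gcongr
      exact hyc.trans hce.le
  norm_cast at hle
  rw [div_lt_iff₀ hed'] at hlarge
  linarith

theorem accumulation_point_of_equilibrium_states_is_maximizing_general
    {X : Type*} [TopologicalSpace X] [T2Space X] [CompactSpace X] [MeasurableSpace X]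
    [BorelSpace X] [HasOuterApproxClosed X] {T : X → X} (hT : Continuous T)
    {φ : ℕ → X → ℝ} (hφ : SubadditivePotential T φ)
    {h : ProbabilityMeasure X → ℝ} (hh : BddAbove (h '' invariantMeasures T))
    {χ : ProbabilityMeasure X → EReal}
    (hχ : ∀ μ ∈ invariantMeasures T, HasLyapunovExponent φ (μ : Measure X) (χ μ))
    {β : EReal} (hβ : HasMaximalExponent φ β) {μt : ℝ → ProbabilityMeasure X}
    (hμt : ∀ t : ℝ, 0 < t → μt t ∈ invariantMeasures T)
    (hmax : ∀ t : ℝ, 0 < t →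
      IsMaxOn (fun ν ↦ (h ν : EReal) + (t : EReal) * χ ν) (invariantMeasures T) (μt t))
    {μ_inf : ProbabilityMeasure X} (hacc : MapClusterPt μ_inf atTop μt) : χ μ_inf = β := by
  have : Nonempty X := nonempty_of_isProbabilityMeasure (μ_inf : Measure X)
  have hinv : ∀ᶠ t in atTop, μt t ∈ invariantMeasures T := (eventually_gt_atTop 0).mono hμt
  have hμ_inf : μ_inf ∈ invariantMeasures T :=
    (isClosed_invariantMeasures hT).mem_of_mapClusterPt hacc hinv
  refine ((hχ _ hμ_inf).le_maximalExponent hφ hβ).antisymm (not_lt.1 fun hlt ↦ ?_)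
  obtain ⟨c, hμ_inf_lt, hcβ⟩ := exists_between hlt
  obtain ⟨ν, hν, hν_max⟩ := exists_maximizing_measure hT hφ hβ
  obtain ⟨H, hH⟩ := hh
  have husc := eventually_nhdsWithin_iff.1
    (upperSemicontinuousOn_lyapunovExponent hT.measurable hφ hχ μ_inf hμ_inf c hμ_inf_lt)
  obtain ⟨t, hχ_lt, ht, hχ_gt⟩ := ((hacc.frequently husc).and_eventually
    ((eventually_gt_atTop 0).and (eventually_forall_lt_of_add_mul_le hcβ (h ν) H))).exists
  refine (hχ_lt (hμt t ht)).not_gt (hχ_gt _ ?_)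
  calc (h ν : EReal) + t * β = h ν + t * χ ν := by rw [hν_max _ (hχ ν hν)]
    _ ≤ h (μt t) + t * χ (μt t) := hmax t ht hν
    _ ≤ H + t * χ (μt t) := by
      gcongr
      exact hH ⟨_, hμt t ht, rfl⟩

end Equilibrium

/-- any weak-* accumulation point of equilibrium states (μ_t) for tΦ as
t → ∞ is a Lyapunov maximizing measure: χ(μ,Φ) = β(Φ). -/
theorem accumulation_point_of_equilibrium_states_is_maximizing
    {X : Type*} [MetricSpace X] [CompactSpace X] [Nonempty X]
    [MeasurableSpace X] [BorelSpace X]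
    (T : X → X) (hT : Continuous T)
    (φ : ℕ → X → ℝ) (hφ : SubadditivePotential T φ)
    -- metric entropies: nonnegative, bounded (finite topological entropy), and
    -- upper semi-continuous on the set of invariant measures
    (h : ProbabilityMeasure X → ℝ) (hh0 : ∀ μ, 0 ≤ h μ)
    (htop : ∃ H : ℝ, ∀ μ : ProbabilityMeasure X,
      Measure.map T (μ : Measure X) = (μ : Measure X) → h μ ≤ H)
    (husc : UpperSemicontinuousOn h
      {μ : ProbabilityMeasure X | Measure.map T (μ : Measure X) = (μ : Measure X)})
    -- Lyapunov exponents of invariant measures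
    (χ : ProbabilityMeasure X → EReal)
    (hχ : ∀ μ : ProbabilityMeasure X, Measure.map T (μ : Measure X) = (μ : Measure X) →
      Tendsto (fun n : ℕ => eint (μ : Measure X) (fun x => elog (φ n x)) / (n : EReal))
        atTop (𝓝 (χ μ)))
    -- β(Φ) > -∞
    (β : EReal) (hβne : β ≠ ⊥)
    (hβ : Tendsto (fun n : ℕ => elog (⨆ x, φ n x) / (n : EReal)) atTop (𝓝 β))
    -- the topological pressure, via the variational principle, and equilibrium states
    (P : ℝ → ℝ)
    (hP : ∀ t ∈ Set.Ioi (0 : ℝ), (P t : EReal) =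
      sSup ((fun ν => (h ν : EReal) + (t : EReal) * χ ν) ''
        {ν : ProbabilityMeasure X | Measure.map T (ν : Measure X) = (ν : Measure X)}))
    (μt : ℝ → ProbabilityMeasure X)
    (hEq : ∀ t ∈ Set.Ioi (0 : ℝ),
      Measure.map T (μt t : Measure X) = (μt t : Measure X) ∧
      (h (μt t) : EReal) + (t : EReal) * χ (μt t) = (P t : EReal))
    -- μ_inf is a weak-* accumulation point of (μ_t) as t → ∞
    (μ_inf : ProbabilityMeasure X) (hacc : MapClusterPt μ_inf atTop μt) :
    χ μ_inf = β := by
  obtain ⟨H, hH⟩ := htop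
  exact accumulation_point_of_equilibrium_states_is_maximizing_general hT hφ
    ⟨H, forall_mem_image.2 hH⟩ hχ hβ (fun t ht ↦ (hEq t ht).1)
    (fun t ht ν hν ↦ (le_sSup (mem_image_of_mem _ hν)).trans_eq
      ((hP t ht).symm.trans (hEq t ht).2.symm)) hacc
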